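/- arXiv:2512.17448 — 2 statements merged into one kernel-verified Lean document; each statement's English description precedes it below -/
import Mathlib

section
/- Fix γ > 0 and 1 ≤ p ≤ ∞. The differential operator d/dx is hypercyclic on (C^∞([0,γ]), ρ_p): there exists f ∈ C^∞([0,γ]) whose orbit {f, f', f'', …} = {d^n f/dx^n : n ∈ ℕ} is dense in (C^∞([0,γ]), ρ_p). -/
open MeasureTheory Set Filter
open scoped ENNReal Topology

/-- The `L^p` distance of two functions over the interval `[a, b]`. -/
noncomputable def rho (a b : ℝ) (p : ℝ≥0∞) (f g : ℝ → ℝ) : ℝ :=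
  (eLpNorm (fun x => f x - g x) p (volume.restrict (Icc a b))).toReal

/-- Exponential generating function. -/
noncomputable def egf (a : ℕ → ℝ) (x : ℝ) : ℝ := ∑' m, a m * x ^ m / (m.factorial : ℝ)

def GrowthBd (a : ℕ → ℝ) : Prop := ∃ C : ℝ, ∀ m, |a m| ≤ C * 2 ^ m

lemma GrowthBd.shift {a : ℕ → ℝ} (h : GrowthBd a) (n : ℕ) : GrowthBd (fun m => a (m + n)) := by
  obtain ⟨C, hC⟩ := h
  refine ⟨C * 2 ^ n, fun m => (hC _).trans (le_of_eq ?_)⟩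
  ring

lemma term_bd {a : ℕ → ℝ} {C R x : ℝ} (hC : ∀ m, |a m| ≤ C * 2 ^ m) (hx : |x| ≤ R) (m : ℕ) :
    ‖a m * x ^ m / (m.factorial : ℝ)‖ ≤ C * ((2 * R) ^ m / (m.factorial : ℝ)) := by
  rw [norm_div, norm_mul, norm_pow, Real.norm_eq_abs, Real.norm_eq_abs, Real.norm_eq_abs,
    abs_of_nonneg (by positivity : (0 : ℝ) ≤ (m.factorial : ℝ)), ← mul_div_assoc, mul_pow,
    ← mul_assoc]
  have h1 := hC m
  have h0 : 0 ≤ C * 2 ^ m := (abs_nonneg _).trans h1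
  gcongr

lemma summable_egf {a : ℕ → ℝ} (h : GrowthBd a) (x : ℝ) :
    Summable (fun m => a m * x ^ m / (m.factorial : ℝ)) := by
  obtain ⟨C, hC⟩ := h
  exact Summable.of_norm_bounded ((Real.summable_pow_div_factorial (2 * |x|)).mul_left C)
    (term_bd hC le_rfl)

lemma hasDerivAt_egf {a : ℕ → ℝ} (h : GrowthBd a) (x : ℝ) :
    HasDerivAt (egf a) (egf (fun m => a (m + 1)) x) x := by
  have hs := h.shift 1
  obtain ⟨C, hC⟩ := hs
  set R := |x| + 1 with hR
  let g' : ℕ → ℝ → ℝ := fun m y => a m * (m * y ^ (m - 1)) / (m.factorial : ℝ)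
  have hg' : ∀ m y, g' (m + 1) y = a (m + 1) * y ^ m / (m.factorial : ℝ) := by
    intro m y
    simp only [g', Nat.factorial_succ, Nat.add_sub_cancel]
    push_cast
    field_simp
  let u : ℕ → ℝ := fun m => Nat.casesOn m 0 (fun k => C * ((2 * R) ^ k / (k.factorial : ℝ)))
  have hu : Summable u := by
    rw [← summable_nat_add_iff 1]
    exact (Real.summable_pow_div_factorial (2 * R)).mul_left C
  have key := hasDerivAt_tsum_of_isPreconnected (u := u) (t := Metric.ball (0:ℝ) R)
    (g := fun m y => a m * y ^ m / (m.factorial : ℝ)) (g' := g') (y₀ := 0) (y := x) hu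
    Metric.isOpen_ball (convex_ball _ _).isPreconnected
    (fun m y _ => ((hasDerivAt_pow m y).const_mul (a m)).div_const _)
    (by
      intro m y hy
      cases m with
      | zero => simp [g', u]
      | succ k =>
        rw [hg']
        refine term_bd hC ?_ k
        have := mem_ball_zero_iff.1 hy
        rw [Real.norm_eq_abs] at this
        exact this.le)
    (by simp; positivity)
    (summable_egf h 0) (by simp [hR])
  have hsum : Summable (fun m => g' m x) := by
    rw [← summable_nat_add_iff 1]
    simp only [hg']
    exact summable_egf (h.shift 1) x
  have he : egf (fun m => a (m + 1)) x = ∑' m, g' m x := by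
    rw [hsum.tsum_eq_zero_add]
    simp only [hg']
    simp [g', egf]
  rw [he]
  exact key

lemma deriv_egf {a : ℕ → ℝ} (h : GrowthBd a) : deriv (egf a) = egf (fun m => a (m + 1)) :=
  funext fun x => (hasDerivAt_egf h x).deriv

lemma iter_egf (n : ℕ) : ∀ {a : ℕ → ℝ}, GrowthBd a → deriv^[n] (egf a) = egf (fun m => a (m + n)) := by
  induction n with
  | zero => intro a _; rfl
  | succ n ih =>
    intro a h
    rw [Function.iterate_succ_apply, deriv_egf h, ih (h.shift 1)]
    simp only [add_assoc]

lemma contDiff_egf {a : ℕ → ℝ} (h : GrowthBd a) : ContDiff ℝ (⊤ : ℕ∞) (egf a) := by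
  refine contDiff_of_differentiable_iteratedDeriv fun m _ => ?_
  rw [iteratedDeriv_eq_iterate, iter_egf m h]
  exact fun x => (hasDerivAt_egf (h.shift m) x).differentiableAt

lemma egf_poly (q : Polynomial ℝ) (x : ℝ) :
    egf (fun m => m.factorial * q.coeff m) x = q.eval x := by
  rw [Polynomial.eval_eq_sum_range, egf, tsum_eq_sum (s := Finset.range (q.natDegree + 1))]
  · refine Finset.sum_congr rfl fun m _ => ?_
    field_simp
  · intro m hm
    rw [Polynomial.coeff_eq_zero_of_natDegree_lt (by simpa using hm)]
    simp

/-- The block gluing. -/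
lemma exists_glue (n : ℕ → ℕ) (hn : StrictMono n) (c : ℕ → ℕ → ℝ) :
    ∃ a : ℕ → ℝ, (∀ m, m < n 0 → a m = 0) ∧
      (∀ k m, n k ≤ m → m < n (k + 1) → a m = c k (m - n k)) ∧
      (∀ m, n 0 ≤ m → ∃ k, n k ≤ m ∧ m < n (k + 1)) := by
  classical
  have huniq : ∀ k l m, n k ≤ m → m < n (k + 1) → n l ≤ m → m < n (l + 1) → k = l := by
    intro k l m h1 h2 h3 h4
    have h5 := hn.lt_iff_lt.1 (h1.trans_lt h4)
    have h6 := hn.lt_iff_lt.1 (h3.trans_lt h2)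
    omega
  refine ⟨fun m => if h : ∃ k, n k ≤ m ∧ m < n (k + 1) then c h.choose (m - n h.choose) else 0,
    ?_, ?_, ?_⟩
  · intro m hm
    beta_reduce
    rw [dif_neg]
    rintro ⟨k, hk, _⟩
    have := hn.monotone (Nat.zero_le k)
    omega
  · intro k m h1 h2
    have h : ∃ k, n k ≤ m ∧ m < n (k + 1) := ⟨k, h1, h2⟩
    simp only [dif_pos h]
    rw [huniq _ k m h.choose_spec.1 h.choose_spec.2 h1 h2]
  · intro m hm
    have hex : ∃ k, m < n (k + 1) := ⟨m, lt_of_lt_of_le (Nat.lt_succ_self m) hn.le_apply⟩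
    refine ⟨Nat.find hex, ?_, Nat.find_spec hex⟩
    rcases Nat.eq_zero_or_pos (Nat.find hex) with h0 | h0
    · rw [h0]; exact hm
    · have := Nat.find_min hex (m := Nat.find hex - 1) (by omega)
      rw [Nat.sub_add_cancel h0] at this
      omega

lemma exists_main (γ : ℝ) (q : ℕ → Polynomial ℝ) :
    ∃ f : ℝ → ℝ, ContDiff ℝ (⊤ : ℕ∞) f ∧ ∀ k : ℕ, ∃ N : ℕ, ∀ x ∈ Icc 0 γ,
      |(deriv^[N] f) x - (q k).eval x| ≤ 1 / ((k : ℝ) + 1) := by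
  let c : ℕ → ℕ → ℝ := fun k m => m.factorial * (q k).coeff m
  have hM : ∀ k, ∃ M : ℝ, ∀ j, |c k j| ≤ M := by
    intro k
    refine ⟨∑ j ∈ Finset.range ((q k).natDegree + 1), |c k j|, fun j => ?_⟩
    by_cases hj : j < (q k).natDegree + 1
    · exact Finset.single_le_sum (f := fun j => |c k j|) (fun _ _ => abs_nonneg _)
        (Finset.mem_range.2 hj)
    · simp only [c]
      rw [Polynomial.coeff_eq_zero_of_natDegree_lt (by omega)]
      simp only [mul_zero, abs_zero]
      positivity
  choose M hM using hM
  let w : ℕ → ℝ := fun j => (2 * γ) ^ j / (j.factorial : ℝ)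
  have hw : Summable w := Real.summable_pow_div_factorial _
  have step : ∀ k s : ℕ, ∃ t : ℕ, s < t ∧ s + (q k).natDegree < t ∧ M (k + 1) ≤ 2 ^ t ∧
      2 ^ s * ∑' j, w (j + (t - s)) ≤ 1 / ((k : ℝ) + 1) := by
    intro k s
    have h1 : Tendsto (fun t : ℕ => (2 : ℝ) ^ s * ∑' j, w (j + (t - s))) atTop (𝓝 (2 ^ s * 0)) :=
      ((tendsto_sum_nat_add w).comp (tendsto_sub_atTop_nat s)).const_mul _
    rw [mul_zero] at h1
    have h2 := h1.eventually_le_const (show (0 : ℝ) < 1 / ((k : ℝ) + 1) by positivity)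
    have h3 := (tendsto_pow_atTop_atTop_of_one_lt (one_lt_two : (1 : ℝ) < 2)).eventually_ge_atTop
      (M (k + 1))
    obtain ⟨t, ⟨⟨h2, h3⟩, h4⟩, h5⟩ := (((h2.and h3).and (eventually_gt_atTop s)).and
      (eventually_gt_atTop (s + (q k).natDegree))).exists
    exact ⟨t, h4, h5, h3, h2⟩
  choose nx hx1 hx2 hx3 hx4 using step
  obtain ⟨n0, hn0⟩ := pow_unbounded_of_one_lt (M 0) (one_lt_two : (1 : ℝ) < 2)
  let n : ℕ → ℕ := fun k => Nat.rec n0 (fun k s => nx k s) k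
  have hnS : ∀ k, n (k + 1) = nx k (n k) := fun k => rfl
  have hn : StrictMono n := strictMono_nat_of_lt_succ fun k => by rw [hnS]; exact hx1 _ _
  have hnM : ∀ k, M k ≤ 2 ^ n k := by
    intro k
    cases k with
    | zero => exact hn0.le
    | succ k => rw [hnS]; exact hx3 _ _
  obtain ⟨a, ha0, ha1, ha2⟩ := exists_glue n hn c
  have hab : ∀ m, |a m| ≤ 1 * 2 ^ m := by
    intro m
    rw [one_mul]
    rcases lt_or_ge m (n 0) with hm | hm
    · rw [ha0 m hm, abs_zero]; positivity
    · obtain ⟨k, h1, h2⟩ := ha2 m hm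
      rw [ha1 k m h1 h2]
      exact ((hM _ _).trans (hnM k)).trans (pow_le_pow_right₀ one_le_two h1)
  have hgr : GrowthBd a := ⟨1, hab⟩
  refine ⟨egf a, contDiff_egf hgr, fun k => ⟨n k, fun x hx => ?_⟩⟩
  rw [iter_egf _ hgr, ← egf_poly]
  have hcg : GrowthBd (c k) := by
    refine ⟨M k, fun m => (hM k m).trans ?_⟩
    have h0 : 0 ≤ M k := (abs_nonneg _).trans (hM k 0)
    exact le_mul_of_one_le_right h0 (one_le_pow₀ one_le_two)
  have s1 := summable_egf (hgr.shift (n k)) x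
  have s2 := summable_egf hcg x
  change |egf _ x - egf (c k) x| ≤ _
  rw [egf, egf, ← s1.tsum_sub s2, ← (s1.sub s2).sum_add_tsum_nat_add (n (k + 1) - n k),
    Finset.sum_eq_zero, zero_add]
  · have hT := hx4 k (n k)
    rw [← hnS] at hT
    refine le_trans ?_ hT
    have hsw : Summable (fun j => (2 : ℝ) ^ n k * w (j + (n (k + 1) - n k))) :=
      ((summable_nat_add_iff _).2 hw).mul_left _
    rw [← tsum_mul_left, ← Real.norm_eq_abs]
    refine tsum_of_norm_bounded hsw.hasSum fun j => ?_
    have hd : (q k).natDegree < j + (n (k + 1) - n k) := by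
      have := hx2 k (n k)
      rw [← hnS] at this
      omega
    have : c k (j + (n (k + 1) - n k)) = 0 := by
      simp only [c]
      rw [Polynomial.coeff_eq_zero_of_natDegree_lt hd, mul_zero]
    rw [this, zero_mul, zero_div, sub_zero]
    refine term_bd (a := fun m => a (m + n k)) (fun m => (hab _).trans (le_of_eq ?_)) ?_ _
    · ring
    · rw [abs_of_nonneg hx.1]; exact hx.2
  · intro j hj
    have hj := Finset.mem_range.1 hj
    rw [ha1 k (j + n k) (by omega) (by omega), Nat.add_sub_cancel, sub_self]

/-- Fix `γ > 0` and `1 ≤ p ≤ ∞`. The differential operator `d/dx` is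
hypercyclic on `(C^∞([0, γ]), ρ_p)`: there is a smooth function `f` whose orbit
`{dⁿf/dxⁿ : n ∈ ℕ}` is dense in `(C^∞([0, γ]), ρ_p)`. -/
theorem stmt6 (γ : ℝ) (hγ : 0 < γ) (p : ℝ≥0∞) (hp : 1 ≤ p) :
    ∃ f : ℝ → ℝ, ContDiff ℝ (⊤ : ℕ∞) f ∧
      ∀ g : ℝ → ℝ, ContDiff ℝ (⊤ : ℕ∞) g → ∀ ε > (0 : ℝ),
        ∃ n : ℕ, rho 0 γ p (deriv^[n] f) g < ε := by
  let u : ℕ → C(Icc (0 : ℝ) γ, ℝ) := TopologicalSpace.denseSeq _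
  have hq : ∀ k : ℕ, ∃ q : Polynomial ℝ,
      ‖q.toContinuousMapOn (Icc 0 γ) - u k.unpair.1‖ < 1 / ((k.unpair.2 : ℝ) + 1) := fun k =>
    exists_polynomial_near_continuousMap 0 γ _ _ (by positivity)
  choose q hq using hq
  obtain ⟨f, hf, hfq⟩ := exists_main γ q
  refine ⟨f, hf, fun g hg ε hε => ?_⟩
  set K : ℝ := ((volume.restrict (Icc 0 γ) univ : ℝ≥0∞) ^ p.toReal⁻¹).toReal with hK
  have hK0 : 0 ≤ K := ENNReal.toReal_nonneg
  obtain ⟨δ, hδ, hδε⟩ : ∃ δ : ℝ, 0 < δ ∧ K * (3 * δ) < ε := by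
    refine ⟨ε / (3 * (K + 1)), by positivity, ?_⟩
    rw [show K * (3 * (ε / (3 * (K + 1)))) = ε * (K / (K + 1)) by field_simp]
    have : K / (K + 1) < 1 := by rw [div_lt_one (by positivity)]; linarith
    nlinarith
  let G : C(Icc (0 : ℝ) γ, ℝ) := ⟨fun x => g x, hg.continuous.comp continuous_subtype_val⟩
  obtain ⟨i, hi⟩ := (TopologicalSpace.denseRange_denseSeq C(Icc (0 : ℝ) γ, ℝ)).exists_dist_lt G hδ
  obtain ⟨l, hl⟩ := exists_nat_one_div_lt hδ
  obtain ⟨N, hN⟩ := hfq (Nat.pair i l)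
  refine ⟨N, ?_⟩
  have hqk := hq (Nat.pair i l)
  rw [Nat.unpair_pair] at hqk
  have hbd : ∀ x ∈ Icc 0 γ, ‖(deriv^[N] f) x - g x‖ ≤ 3 * δ := by
    intro x hx
    have h1 := hN x hx
    have h2 : (1 : ℝ) / ((Nat.pair i l : ℝ) + 1) ≤ 1 / ((l : ℝ) + 1) := by
      have : (l : ℝ) ≤ Nat.pair i l := by exact_mod_cast Nat.right_le_pair i l
      gcongr
    have h3 := (ContinuousMap.norm_coe_le_norm
      ((q (Nat.pair i l)).toContinuousMapOn (Icc 0 γ) - u i) ⟨x, hx⟩).trans_lt hqk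
    have h4 := (ContinuousMap.dist_apply_le_dist (f := G) (g := u i) ⟨x, hx⟩).trans_lt hi
    rw [Real.dist_eq] at h4
    change |(q (Nat.pair i l)).eval x - u i ⟨x, hx⟩| < _ at h3
    change |g x - u i ⟨x, hx⟩| < _ at h4
    rw [Real.norm_eq_abs]
    rw [abs_le] at *
    rw [abs_lt] at *
    constructor <;> linarith [h1.1, h1.2]
  have hae : ∀ᵐ x ∂(volume.restrict (Icc 0 γ)), ‖(deriv^[N] f) x - g x‖ ≤ 3 * δ :=
    (ae_restrict_mem measurableSet_Icc).mono hbd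
  have hle := eLpNorm_le_of_ae_bound (p := p) hae
  refine lt_of_le_of_lt ?_ hδε
  have hfin : (volume.restrict (Icc 0 γ) univ : ℝ≥0∞) ^ p.toReal⁻¹ ≠ ∞ :=
    ENNReal.rpow_ne_top_of_nonneg (by positivity) (by simp)
  have := ENNReal.toReal_mono (ENNReal.mul_ne_top hfin ENNReal.ofReal_ne_top) hle
  rw [ENNReal.toReal_mul, ENNReal.toReal_ofReal (by positivity)] at this
  exact this
end

section
/- Let a < b be real numbers and 1 ≤ p ≤ ∞. The differential operator d/dx is chaotic in the sense of Devaney on (C^∞([a,b]), ρ_p): the set of periodic points of d/dx is dense in (C^∞([a,b]), ρ_p), and d/dx is topologically transitive on (C^∞([a,b]), ρ_p). -/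
open MeasureTheory Set Filter
open scoped ENNReal Topology

lemma aux_rho (a b : ℝ) (p : ℝ≥0∞) (ε : ℝ) (hε : 0 < ε) :
    ∃ η > (0 : ℝ), ∀ f g : ℝ → ℝ, (∀ x ∈ Icc a b, |f x - g x| ≤ η) → rho a b p f g < ε := by
  set K : ℝ≥0∞ := (volume.restrict (Icc a b)) univ ^ (p.toReal⁻¹) with hK
  have hKt : K ≠ ⊤ := by
    apply ENNReal.rpow_ne_top_of_nonneg (by positivity)
    exact measure_ne_top _ _
  have hK0 : 0 ≤ K.toReal := ENNReal.toReal_nonneg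
  refine ⟨ε / (K.toReal + 1), by positivity, fun f g h => ?_⟩
  have h1 : eLpNorm (fun x => f x - g x) p (volume.restrict (Icc a b)) ≤
      K * ENNReal.ofReal (ε / (K.toReal + 1)) := by
    apply eLpNorm_le_of_ae_bound
    rw [ae_restrict_iff' measurableSet_Icc]
    exact Eventually.of_forall fun x hx => h x hx
  have h2 := ENNReal.toReal_mono (ENNReal.mul_ne_top hKt ENNReal.ofReal_ne_top) h1
  rw [ENNReal.toReal_mul, ENNReal.toReal_ofReal (by positivity)] at h2
  refine lt_of_le_of_lt h2 ?_
  rw [← mul_div_assoc, div_lt_iff₀ (by positivity)]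
  nlinarith

lemma aux_tendsto (C D R η : ℝ) (hη : 0 < η) :
    ∀ᶠ n : ℕ in atTop, C * (R ^ n / (n.factorial : ℝ)) * D ≤ η := by
  have h := ((FloorSemiring.tendsto_pow_div_factorial_atTop R).const_mul C).mul_const D
  simp only [mul_zero, zero_mul] at h
  exact h.eventually (ge_mem_nhds hη)

lemma aux_int (R : ℝ) (Q : Polynomial ℝ) : ∀ η > (0 : ℝ), ∀ᶠ n : ℕ in atTop,
    ∃ S : Polynomial ℝ, Polynomial.derivative^[n] S = Q ∧ ∀ x, |x| ≤ R → |S.eval x| ≤ η := by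
  induction Q using Polynomial.induction_on' with
  | add P Q hP hQ =>
    intro η hη
    filter_upwards [hP (η / 2) (by positivity), hQ (η / 2) (by positivity)]
    rintro n ⟨S, hS, hS'⟩ ⟨T, hT, hT'⟩
    refine ⟨S + T, by rw [iterate_map_add, hS, hT], fun x hx => ?_⟩
    rw [Polynomial.eval_add]
    have := abs_add_le (S.eval x) (T.eval x)
    linarith [hS' x hx, hT' x hx]
  | monomial k c =>
    intro η hη
    filter_upwards [aux_tendsto |c| (R ^ k) R η hη] with n hn
    have hpos : 0 < (k + n).descFactorial n := Nat.descFactorial_pos.2 (by omega)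
    have hne : ((k + n).descFactorial n : ℝ) ≠ 0 := by positivity
    refine ⟨Polynomial.C (c / ((k + n).descFactorial n : ℝ)) * Polynomial.X ^ (k + n), ?_, ?_⟩
    · rw [Polynomial.iterate_derivative_C_mul, Polynomial.iterate_derivative_X_pow_eq_natCast_mul,
        ← mul_assoc, ← Polynomial.C_eq_natCast, ← Polynomial.C_mul, Nat.add_sub_cancel,
        Polynomial.C_mul_X_pow_eq_monomial]
      congr 1
      field_simp
    · intro x hx
      refine le_trans ?_ hn
      have hle : (n.factorial : ℝ) ≤ ((k + n).descFactorial n : ℝ) := by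
        exact_mod_cast Nat.le_of_dvd hpos (Nat.factorial_dvd_descFactorial _ _)
      have hf : (0 : ℝ) < n.factorial := by positivity
      have hR : 0 ≤ R := (abs_nonneg x).trans hx
      simp only [Polynomial.eval_mul, Polynomial.eval_C, Polynomial.eval_pow, Polynomial.eval_X,
        abs_mul, abs_div, abs_pow, Nat.abs_cast]
      calc |c| / ((k + n).descFactorial n : ℝ) * |x| ^ (k + n)
          ≤ |c| / (n.factorial : ℝ) * R ^ (k + n) := by gcongr
        _ = _ := by rw [pow_add]; ring

/-- The exponential sums. -/
noncomputable def expSum (m : ℕ) (c w : ℕ → ℂ) (n : ℕ) (x : ℝ) : ℝ :=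
  (∑ j ∈ Finset.range m, c j * w j ^ n * Complex.exp (w j * x)).re

lemma expSum_hasDerivAt (m : ℕ) (c w : ℕ → ℂ) (n : ℕ) (x : ℝ) :
    HasDerivAt (expSum m c w n) (expSum m c w (n + 1) x) x := by
  have h : HasDerivAt (fun z : ℂ => ∑ j ∈ Finset.range m, c j * w j ^ n * Complex.exp (w j * z))
      (∑ j ∈ Finset.range m, c j * w j ^ (n + 1) * Complex.exp (w j * x)) (x : ℂ) := by
    apply HasDerivAt.fun_sum
    intro j _
    have h1 := (((hasDerivAt_id (x : ℂ)).const_mul (w j)).cexp).const_mul (c j * w j ^ n)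
    refine HasDerivAt.congr_deriv h1 ?_
    simp only [id, mul_one]
    ring
  exact h.real_of_complex

lemma expSum_iter (m : ℕ) (c w : ℕ → ℂ) (n k : ℕ) :
    deriv^[n] (expSum m c w k) = expSum m c w (k + n) := by
  induction n with
  | zero => rfl
  | succ n ih =>
    rw [Function.iterate_succ_apply', ih]
    funext x
    exact (expSum_hasDerivAt m c w (k + n) x).deriv

lemma expSum_contDiff (m : ℕ) (c w : ℕ → ℂ) (n : ℕ) :
    ContDiff ℝ (⊤ : ℕ∞) (expSum m c w n) := by
  have h : ContDiff ℝ (⊤ : ℕ∞) (fun x : ℝ =>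
      ∑ j ∈ Finset.range m, c j * w j ^ n * Complex.exp (w j * x)) := by
    apply ContDiff.sum
    intro j _
    exact contDiff_const.mul ((contDiff_const.mul Complex.ofRealCLM.contDiff).cexp)
  exact Complex.reCLM.contDiff.comp h

lemma aux_orth (m : ℕ) (ζ : ℂ) (hζ : IsPrimitiveRoot ζ m) (k n : ℕ) (hk : k < m) (hn : n < m) :
    ∑ j ∈ Finset.range m, (ζ ^ (j * k))⁻¹ * (ζ ^ j) ^ n = if n = k then (m : ℂ) else 0 := by
  have h0 : ζ ≠ 0 := hζ.ne_zero (by omega)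
  split_ifs with h
  · subst h
    have : ∀ j ∈ Finset.range m, (ζ ^ (j * n))⁻¹ * (ζ ^ j) ^ n = 1 := by
      intro j _
      rw [← pow_mul, inv_mul_cancel₀ (pow_ne_zero _ h0)]
    rw [Finset.sum_congr rfl this]
    simp
  · have e : ∀ j ∈ Finset.range m, (ζ ^ (j * k))⁻¹ * (ζ ^ j) ^ n = ((ζ ^ k)⁻¹ * ζ ^ n) ^ j := by
      intro j _
      rw [mul_pow, inv_pow, ← pow_mul, ← pow_mul, ← pow_mul, mul_comm k, mul_comm n]
    rw [Finset.sum_congr rfl e]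
    have hne : (ζ ^ k)⁻¹ * ζ ^ n ≠ 1 := by
      intro hh
      apply h
      rw [inv_mul_eq_one₀ (pow_ne_zero _ h0)] at hh
      exact (hζ.pow_inj hk hn hh).symm
    have hp : ((ζ ^ k)⁻¹ * ζ ^ n) ^ m = 1 := by
      rw [mul_pow, inv_pow, ← pow_mul, ← pow_mul, mul_comm k, mul_comm n, pow_mul, pow_mul,
        hζ.pow_eq_one]
      simp
    rw [geom_sum_eq hne, hp]
    simp

lemma aux_mono (m k : ℕ) (hk : k < m) (R : ℝ) (s : ℝ) (hmR' : 2 * R ≤ m) :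
    ∃ c w : ℕ → ℂ, (∀ j, w j ^ m = 1) ∧ ∀ x : ℝ, |x| ≤ R →
      |expSum m c w 0 x - s * x ^ k| ≤
        |s| * k.factorial * (R ^ m / (m.factorial : ℝ)) * 2 := by
  have hm : m ≠ 0 := by omega
  have hmC : (m : ℂ) ≠ 0 := by exact_mod_cast hm
  set ζ : ℂ := Complex.exp (2 * Real.pi * Complex.I / m)
  have hζ : IsPrimitiveRoot ζ m := Complex.isPrimitiveRoot_exp m hm
  have hw : ∀ j : ℕ, (ζ ^ j) ^ m = 1 := fun j => by
    rw [← pow_mul, mul_comm, pow_mul, hζ.pow_eq_one, one_pow]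
  have hn1 : ‖ζ‖ = 1 := hζ.norm'_eq_one hm
  refine ⟨fun j => s * k.factorial / m * (ζ ^ (j * k))⁻¹, fun j => ζ ^ j, hw, fun x hx => ?_⟩
  have hR : 0 ≤ R := (abs_nonneg x).trans hx
  -- the polynomial part
  have key : ∑ j ∈ Finset.range m, (s * k.factorial / m * (ζ ^ (j * k))⁻¹ : ℂ) *
      ∑ n ∈ Finset.range m, (ζ ^ j * x) ^ n / (n.factorial : ℂ) = s * x ^ k := by
    calc _ = ∑ n ∈ Finset.range m, (s * k.factorial / m * x ^ n / (n.factorial : ℂ)) *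
          ∑ j ∈ Finset.range m, (ζ ^ (j * k))⁻¹ * (ζ ^ j) ^ n := by
          simp only [Finset.mul_sum]
          rw [Finset.sum_comm]
          refine Finset.sum_congr rfl fun n _ => Finset.sum_congr rfl fun j _ => ?_
          rw [mul_pow]; ring
      _ = ∑ n ∈ Finset.range m, (s * k.factorial / m * x ^ n / (n.factorial : ℂ)) *
          (if n = k then (m : ℂ) else 0) := by
          refine Finset.sum_congr rfl fun n hn => ?_
          rw [aux_orth m ζ hζ k n hk (Finset.mem_range.1 hn)]
      _ = s * x ^ k := by
          simp only [mul_ite, mul_zero, Finset.sum_ite_eq', Finset.mem_range, hk, if_true]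
          have : (k.factorial : ℂ) ≠ 0 := by exact_mod_cast k.factorial_ne_zero
          field_simp
  have e : expSum m (fun j => s * k.factorial / m * (ζ ^ (j * k))⁻¹) (fun j => ζ ^ j) 0 x
      - s * x ^ k = (∑ j ∈ Finset.range m, (s * k.factorial / m * (ζ ^ (j * k))⁻¹ : ℂ) *
        (Complex.exp (ζ ^ j * x) -
          ∑ n ∈ Finset.range m, (ζ ^ j * x) ^ n / (n.factorial : ℂ))).re := by
    have e1 : s * x ^ k = ((s : ℂ) * x ^ k).re := by norm_cast
    simp only [mul_sub, Finset.sum_sub_distrib]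
    rw [key, Complex.sub_re, ← e1]
    simp [expSum]
  rw [e]
  refine (Complex.abs_re_le_norm _).trans ((norm_sum_le _ _).trans ?_)
  have hb : ∀ j ∈ Finset.range m, ‖(s * k.factorial / m * (ζ ^ (j * k))⁻¹ : ℂ) *
        (Complex.exp (ζ ^ j * x) -
          ∑ n ∈ Finset.range m, (ζ ^ j * x) ^ n / (n.factorial : ℂ))‖ ≤
      |s| * k.factorial / m * (R ^ m / (m.factorial : ℝ) * 2) := by
    intro j _
    have hz : ‖ζ ^ j * (x : ℂ)‖ = |x| := by
      rw [norm_mul, norm_pow, hn1, one_pow, one_mul, Complex.norm_real, Real.norm_eq_abs]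
    have h1 := Complex.exp_bound' (x := ζ ^ j * x) (n := m) (by
      rw [hz, div_le_iff₀ (by positivity)]
      push_cast
      linarith)
    rw [hz] at h1
    rw [norm_mul]
    have hc : ‖(s * k.factorial / m * (ζ ^ (j * k))⁻¹ : ℂ)‖ = |s| * k.factorial / m := by
      simp [hn1]
    rw [hc]
    gcongr
    refine h1.trans ?_
    gcongr
  refine (Finset.sum_le_sum hb).trans (le_of_eq ?_)
  have hmR : (m : ℝ) ≠ 0 := by exact_mod_cast hm
  rw [Finset.sum_const, Finset.card_range, nsmul_eq_mul]
  field_simp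

lemma iter_deriv_add (n : ℕ) : ∀ f g : ℝ → ℝ, ContDiff ℝ (⊤ : ℕ∞) f → ContDiff ℝ (⊤ : ℕ∞) g →
    deriv^[n] (fun x => f x + g x) = fun x => deriv^[n] f x + deriv^[n] g x := by
  induction n with
  | zero => intros; rfl
  | succ n ih =>
    intro f g hf hg
    simp only [Function.iterate_succ_apply]
    have : deriv (fun x => f x + g x) = fun x => deriv f x + deriv g x := by
      funext x
      exact deriv_fun_add (hf.differentiable (by simp) x) (hg.differentiable (by simp) x)
    rw [this]
    exact ih _ _ ((contDiff_infty_iff_deriv.1 hf).2) ((contDiff_infty_iff_deriv.1 hg).2)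

lemma aux_per (R : ℝ) (Q : Polynomial ℝ) : ∀ η > (0 : ℝ), ∀ᶠ m : ℕ in atTop,
    ∃ g : ℝ → ℝ, ContDiff ℝ (⊤ : ℕ∞) g ∧ deriv^[m] g = g ∧
      ∀ x, |x| ≤ R → |g x - Q.eval x| ≤ η := by
  induction Q using Polynomial.induction_on' with
  | add P Q hP hQ =>
    intro η hη
    filter_upwards [hP (η / 2) (by positivity), hQ (η / 2) (by positivity)]
    rintro m ⟨f, hf, hf1, hf2⟩ ⟨g, hg, hg1, hg2⟩
    refine ⟨fun x => f x + g x, hf.add hg, by rw [iter_deriv_add m f g hf hg, hf1, hg1],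
      fun x hx => ?_⟩
    rw [Polynomial.eval_add]
    have := abs_add_le (f x - P.eval x) (g x - Q.eval x)
    rw [show f x + g x - (P.eval x + Q.eval x) = (f x - P.eval x) + (g x - Q.eval x) by ring]
    linarith [hf2 x hx, hg2 x hx]
  | monomial k s =>
    intro η hη
    filter_upwards [aux_tendsto (|s| * k.factorial) 2 R η hη,
      eventually_gt_atTop k, eventually_ge_atTop ⌈2 * R⌉₊] with m hm hk hmR
    obtain ⟨c, w, hw, h⟩ := aux_mono m k hk R s (Nat.ceil_le.1 hmR)
    refine ⟨expSum m c w 0, expSum_contDiff _ _ _ _, ?_, fun x hx => ?_⟩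
    · rw [expSum_iter]
      funext x
      simp [expSum, hw]
    · rw [Polynomial.eval_monomial]
      exact (h x hx).trans hm

lemma iter_deriv_poly (n : ℕ) (P : Polynomial ℝ) :
    deriv^[n] (fun x => P.eval x) = fun x => (Polynomial.derivative^[n] P).eval x := by
  induction n generalizing P with
  | zero => rfl
  | succ n ih =>
    simp only [Function.iterate_succ_apply]
    rw [← ih]
    congr 1
    funext x
    exact P.deriv

/-- Let `a < b` and `1 ≤ p ≤ ∞`. The differential operator `d/dx` is
Devaney chaotic on `(C^∞([a, b]), ρ_p)`: its periodic points are dense, and it is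
topologically transitive (expressed in the equivalent ε-form for metric spaces). -/
theorem stmt8 (a b : ℝ) (hab : a < b) (p : ℝ≥0∞) (hp : 1 ≤ p) :
    (∀ f : ℝ → ℝ, ContDiff ℝ (⊤ : ℕ∞) f → ∀ ε > (0 : ℝ),
      ∃ g : ℝ → ℝ, ContDiff ℝ (⊤ : ℕ∞) g ∧
        (∃ m : ℕ, 1 ≤ m ∧ Set.EqOn (deriv^[m] g) g (Icc a b)) ∧
        rho a b p f g < ε) ∧
    (∀ f : ℝ → ℝ, ContDiff ℝ (⊤ : ℕ∞) f → ∀ g : ℝ → ℝ, ContDiff ℝ (⊤ : ℕ∞) g →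
      ∀ ε > (0 : ℝ), ∃ h : ℝ → ℝ, ContDiff ℝ (⊤ : ℕ∞) h ∧ ∃ n : ℕ,
        rho a b p f h < ε ∧ rho a b p (deriv^[n] h) g < ε) := by
  have hR : ∀ x ∈ Icc a b, |x| ≤ max |a| |b| := fun x hx => abs_le_max_abs_abs hx.1 hx.2
  refine ⟨fun f hf ε hε => ?_, fun f hf g hg ε hε => ?_⟩
  · obtain ⟨η, hη, H⟩ := aux_rho a b p ε hε
    obtain ⟨P, hP⟩ := exists_polynomial_near_of_continuousOn a b f hf.continuous.continuousOn
      (η / 2) (by positivity)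
    obtain ⟨m, ⟨g, hg, hg1, hg2⟩, hm⟩ :=
      ((aux_per (max |a| |b|) P (η / 2) (by positivity)).and (eventually_ge_atTop 1)).exists
    refine ⟨g, hg, ⟨m, hm, fun x _ => by rw [hg1]⟩, H f g fun x hx => ?_⟩
    have h1 := abs_le.1 (hg2 x (hR x hx))
    have h2 := abs_lt.1 (hP x hx)
    rw [abs_le]
    constructor <;> linarith
  · obtain ⟨η, hη, H⟩ := aux_rho a b p ε hε
    obtain ⟨P, hP⟩ := exists_polynomial_near_of_continuousOn a b f hf.continuous.continuousOn
      (η / 2) (by positivity)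
    obtain ⟨Q, hQ⟩ := exists_polynomial_near_of_continuousOn a b g hg.continuous.continuousOn
      (η / 2) (by positivity)
    obtain ⟨n, ⟨S, hS, hS'⟩, hn⟩ := ((aux_int (max |a| |b|) Q (η / 2) (by positivity)).and
      (eventually_gt_atTop P.natDegree)).exists
    refine ⟨fun x => (P + S).eval x, by simpa using (P + S).contDiff_aeval (R := ℝ) (𝕜 := ℝ) _, n, H _ _ fun x hx => ?_,
      H _ _ fun x hx => ?_⟩
    · have h1 := abs_le.1 (hS' x (hR x hx))
      have h2 := abs_lt.1 (hP x hx)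
      rw [abs_le, Polynomial.eval_add]
      constructor <;> linarith
    · rw [iter_deriv_poly, iterate_map_add, hS,
        Polynomial.iterate_derivative_eq_zero hn, zero_add]
      have h2 := hQ x hx
      linarith
end
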